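/- Let Q = 2n+2, m ≥ 1, 1 < p_j < ∞ for j = 1,…,m, and 1/p = Σ_j 1/p_j with p > 1. Then ∫_{(ℝ^{2n+1})^m} (∏_{j=1}^m |y_j|_h^{-Q/p_j}) / (max(1, |y₁|_h^Q, …, |y_m|_h^Q))^m dy₁⋯dy_m = m·p·Ω_Q^m / ∏_{j=1}^m (1 - 1/p_j). -/

import Mathlib

open MeasureTheory Real Finset

/-- The Heisenberg norm on ℝ^{2n+1}. -/
noncomputable def hNorm (n : ℕ) (x : Fin (2 * n + 1) → ℝ) : ℝ :=
  ((∑ i : Fin (2 * n), (x (Fin.castLE (by omega) i)) ^ 2) ^ 2 +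
      (x ⟨2 * n, by omega⟩) ^ 2) ^ ((1 : ℝ) / 4)

/-- The Heisenberg dilations on ℝ^{2n+1}: the first 2n coordinates are scaled by r,
the last by r². -/
def hDil (n : ℕ) (r : ℝ) (x : Fin (2 * n + 1) → ℝ) : Fin (2 * n + 1) → ℝ :=
  fun i => if (i : ℕ) < 2 * n then r * x i else r ^ 2 * x i

/-!
The function `N = |·|_h ^ Q` turns Lebesgue measure on `ℝ^{2n+1}` into `Ω_Q` times Lebesgue measure
on `[0, ∞)`, because dilations scale volume by `r ^ Q`; this is the polar coordinate formula with
`r ^ Q` as radial variable. Hence the measure `∏ N(y_j)^{-a_j} dy` gives the box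
`{N(y_j) < t for all j}` mass `(∏ Ω_Q / (1 - a_j)) * t ^ ∑ (1 - a_j)`. For `t > 1` this box is
`{M < t}`, where `M = max(1, N(y_1), …, N(y_m))`, so the layer cake formula evaluates the integral
of `M ^ (-b)` against that measure.
-/

open scoped ENNReal NNReal

section LayerCake

theorem setLIntegral_Ioo_zero_one_rpow {r : ℝ} (hr : -1 < r) :
    ∫⁻ t in Set.Ioo (0 : ℝ) 1, ENNReal.ofReal (t ^ r) = ENNReal.ofReal (1 / (r + 1)) := by
  have hint : IntegrableOn (fun t : ℝ => t ^ r) (Set.Ioo 0 1) :=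
    (intervalIntegral.integrableOn_Ioo_rpow_iff one_pos).2 hr
  have hnonneg : ∀ᵐ t ∂volume.restrict (Set.Ioo (0 : ℝ) 1), 0 ≤ t ^ r := by
    filter_upwards [ae_restrict_mem measurableSet_Ioo] with t ht using rpow_nonneg ht.1.le r
  rw [← ofReal_integral_eq_lintegral_ofReal hint hnonneg, ← integral_Ioc_eq_integral_Ioo,
    ← intervalIntegral.integral_of_le zero_le_one, integral_rpow (Or.inl hr), one_rpow,
    zero_rpow (by linarith), sub_zero]

theorem lintegral_rpow_neg_of_measure_lt {α : Type*} [MeasurableSpace α] {ν : Measure α}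
    {M : α → ℝ} (hM : AEMeasurable M ν) (hM1 : ∀ x, 1 ≤ M x) {K : ℝ≥0∞} {s b : ℝ} (hb : 0 < b)
    (hsb : s < b) (hν : ∀ t, 1 < t → ν {x | M x < t} = K * ENNReal.ofReal (t ^ s)) :
    ∫⁻ x, ENNReal.ofReal (M x ^ (-b)) ∂ν = ENNReal.ofReal (b / (b - s)) * K := by
  have hM0 (x) : 0 < M x := one_pos.trans_le (hM1 x)
  have tail_of_lt_one {t : ℝ} (ht0 : 0 < t) (ht1 : t < 1) :
      ν {x | t < (M x)⁻¹} = K * ENNReal.ofReal (t ^ (-s)) := by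
    simp only [lt_inv_comm₀ ht0 (hM0 _)]
    rw [hν _ (one_lt_inv_iff₀.2 ⟨ht0, ht1⟩), inv_rpow ht0.le, rpow_neg ht0.le]
  have tail_of_one_le {t : ℝ} (ht1 : 1 ≤ t) : ν {x | t < (M x)⁻¹} = 0 := by
    have hempty : {x | t < (M x)⁻¹} = ∅ := by
      ext x
      simpa using (inv_le_one_of_one_le₀ (hM1 x)).trans ht1
    rw [hempty, measure_empty]
  calc ∫⁻ x, ENNReal.ofReal (M x ^ (-b)) ∂ν
      = ∫⁻ x, ENNReal.ofReal ((M x)⁻¹ ^ b) ∂ν := by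
        simp only [rpow_neg_eq_inv_rpow]
    _ = ENNReal.ofReal b *
          ∫⁻ t in Set.Ioi 0, ν {x | t < (M x)⁻¹} * ENNReal.ofReal (t ^ (b - 1)) :=
        lintegral_rpow_eq_lintegral_meas_lt_mul ν
          (.of_forall fun x => inv_nonneg.2 (hM0 x).le) hM.inv hb
    _ = ENNReal.ofReal b *
          ∫⁻ t in Set.Ioo 0 1, K * ENNReal.ofReal (t ^ (b - s - 1)) := by
        rw [← lintegral_indicator measurableSet_Ioi, ← lintegral_indicator measurableSet_Ioo]
        congr 2 with t
        rcases le_or_gt t 0 with ht0 | ht0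
        · simp [ht0.not_gt]
        rcases le_or_gt 1 t with ht1 | ht1
        · simp [ht0, ht1.not_gt, tail_of_one_le ht1]
        · simp only [Set.indicator, Set.mem_Ioi, Set.mem_Ioo, ht0, ht1, and_self, if_true]
          rw [tail_of_lt_one ht0 ht1, mul_assoc, ← ENNReal.ofReal_mul (by positivity),
            ← rpow_add ht0]
          ring_nf
    _ = ENNReal.ofReal (b / (b - s)) * K := by
        rw [lintegral_const_mul _ (by fun_prop), setLIntegral_Ioo_zero_one_rpow (by linarith),
          mul_left_comm, ← ENNReal.ofReal_mul hb.le, mul_comm]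
        ring_nf

end LayerCake

section Distribution

variable {α : Type*} [MeasurableSpace α] {μ : Measure α} {f : α → ℝ} {c : ℝ≥0}

theorem map_eq_smul_restrict_Ici_of_measure_lt (hf : Measurable f)
    (hμ : ∀ t, μ {x | f x < t} = c * ENNReal.ofReal t) :
    μ.map f = c • volume.restrict (Set.Ici 0) := by
  have hmap (t : ℝ) : μ.map f (Set.Iio t) = c * ENNReal.ofReal t := by
    rw [Measure.map_apply hf measurableSet_Iio, ← hμ]
    rfl
  refine Measure.ext_of_generateFrom_of_iUnion (Set.range Set.Iio) (fun k : ℕ => Set.Iio (k : ℝ))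
    (BorelSpace.measurable_eq.trans (borel_eq_generateFrom_Iio ℝ)) isPiSystem_Iio ?_
    (fun k => ⟨k, rfl⟩) (fun k => ?_) ?_
  · exact Set.iUnion_eq_univ_iff.2 exists_nat_gt
  · rw [hmap]
    finiteness
  · rintro _ ⟨t, rfl⟩
    rw [hmap, Measure.smul_apply, Measure.restrict_apply measurableSet_Iio, Set.inter_comm,
      Set.Ici_inter_Iio, volume_Ico, sub_zero, ENNReal.smul_def, smul_eq_mul]

theorem map_restrict_lt_of_map_eq (hf : Measurable f)
    (hμ : μ.map f = c • volume.restrict (Set.Ici 0)) (t : ℝ) :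
    (μ.restrict {x | f x < t}).map f = c • volume.restrict (Set.Ico 0 t) := by
  change (μ.restrict (f ⁻¹' Set.Iio t)).map f = _
  rw [← Measure.restrict_map hf measurableSet_Iio, hμ, Measure.restrict_smul,
    Measure.restrict_restrict measurableSet_Iio, Set.inter_comm, Set.Ici_inter_Iio]

theorem integrableOn_rpow_neg_of_map_eq (hf : Measurable f)
    (hμ : μ.map f = c • volume.restrict (Set.Ici 0)) {a t : ℝ} (ha : a < 1) (ht : 0 ≤ t) :
    IntegrableOn (fun x => f x ^ (-a)) {x | f x < t} μ := by
  have hint : IntegrableOn (fun s : ℝ => s ^ (-a)) (Set.Ico 0 t) :=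
    (intervalIntegrable_iff_integrableOn_Ico_of_le ht).1
      (intervalIntegral.intervalIntegrable_rpow' (by linarith))
  refine Integrable.comp_measurable (g := fun s : ℝ => s ^ (-a)) ?_ hf
  rw [map_restrict_lt_of_map_eq hf hμ]
  exact hint.smul_measure_nnreal

theorem setIntegral_rpow_neg_of_map_eq (hf : Measurable f)
    (hμ : μ.map f = c • volume.restrict (Set.Ici 0)) {a t : ℝ} (ha : a < 1) (ht : 0 ≤ t) :
    ∫ x in {x | f x < t}, f x ^ (-a) ∂μ = c / (1 - a) * t ^ (1 - a) := by
  have hmeas : Measurable fun s : ℝ => s ^ (-a) := measurable_id.pow_const _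
  rw [← integral_map hf.aemeasurable hmeas.aestronglyMeasurable, map_restrict_lt_of_map_eq hf hμ,
    integral_smul_nnreal_measure, integral_Ico_eq_integral_Ioc,
    ← intervalIntegral.integral_of_le ht, integral_rpow (Or.inl (by linarith)),
    zero_rpow (by linarith), sub_zero, neg_add_eq_sub, NNReal.smul_def, smul_eq_mul,
    div_mul_eq_mul_div, mul_div_assoc]

end Distribution

theorem max_iSup_lt_iff {ι : Type*} [Finite ι] {f : ι → ℝ} {l t : ℝ} (hl : 0 ≤ l) :
    max l (⨆ j, f j) < t ↔ l < t ∧ ∀ j, f j < t := by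
  rcases isEmpty_or_nonempty ι with _ | _
  · simpa using hl.trans_lt
  · rw [max_lt_iff, iSup, (Set.finite_range f).csSup_lt_iff (Set.range_nonempty f),
      Set.forall_mem_range]

section Product

variable {ι : Type*} [Fintype ι] {X : ι → Type*} [∀ j, MeasurableSpace (X j)]
  {μ : ∀ j, Measure (X j)} [∀ j, SigmaFinite (μ j)] {f : ∀ j, X j → ℝ} {c : ι → ℝ≥0} {a : ι → ℝ}

theorem lintegral_pi_ofReal_prod (hint : ∀ j, Integrable (f j) (μ j))
    (hf0 : ∀ j x, 0 ≤ f j x) :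
    ∫⁻ y, ENNReal.ofReal (∏ j, f j (y j)) ∂Measure.pi μ =
      ENNReal.ofReal (∏ j, ∫ x, f j x ∂μ j) := by
  rw [← ofReal_integral_eq_lintegral_ofReal (Integrable.fintype_prod_dep hint)
    (.of_forall fun y => prod_nonneg fun j _ => hf0 j (y j)), integral_fintype_prod_eq_prod]

theorem setLIntegral_pi_prod_rpow_neg_of_map_eq (hf : ∀ j, Measurable (f j))
    (hf0 : ∀ j x, 0 ≤ f j x) (hμ : ∀ j, (μ j).map (f j) = c j • volume.restrict (Set.Ici 0))
    (ha : ∀ j, a j < 1) {t : ℝ} (ht : 0 < t) :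
    ∫⁻ y in Set.univ.pi fun j => {x | f j x < t},
        ENNReal.ofReal (∏ j, f j (y j) ^ (-a j)) ∂Measure.pi μ =
      ENNReal.ofReal (∏ j, c j / (1 - a j)) * ENNReal.ofReal (t ^ ∑ j, (1 - a j)) := by
  have hconst : 0 ≤ ∏ j, (c j / (1 - a j) : ℝ) :=
    prod_nonneg fun j _ => div_nonneg (c j).2 (sub_nonneg.2 (ha j).le)
  rw [Measure.restrict_pi_pi, lintegral_pi_ofReal_prod
    (fun j => integrableOn_rpow_neg_of_map_eq (hf j) (hμ j) (ha j) ht.le)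
    (fun j x => rpow_nonneg (hf0 j x) _)]
  simp only [setIntegral_rpow_neg_of_map_eq (hf _) (hμ _) (ha _) ht.le]
  rw [prod_mul_distrib, ← rpow_sum_of_pos ht, ENNReal.ofReal_mul hconst]

theorem lintegral_prod_rpow_neg_div_max_one_iSup_rpow (hf : ∀ j, Measurable (f j))
    (hf0 : ∀ j x, 0 ≤ f j x) (hμ : ∀ j, (μ j).map (f j) = c j • volume.restrict (Set.Ici 0))
    (ha : ∀ j, a j < 1) {b : ℝ} (hb : ∑ j, (1 - a j) < b) :
    ∫⁻ y, ENNReal.ofReal ((∏ j, f j (y j) ^ (-a j)) / max 1 (⨆ j, f j (y j)) ^ b) ∂Measure.pi μ =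
      ENNReal.ofReal (b / (b - ∑ j, (1 - a j))) * ENNReal.ofReal (∏ j, c j / (1 - a j)) := by
  set weight : (∀ j, X j) → ℝ := fun y => ∏ j, f j (y j) ^ (-a j)
  set M : (∀ j, X j) → ℝ := fun y => max 1 (⨆ j, f j (y j))
  have hweight : Measurable weight := by fun_prop
  have hM : Measurable M := measurable_const.max (.iSup fun j => by fun_prop)
  have hM1 (y) : 1 ≤ M y := le_max_left _ _
  have hb0 : 0 < b := (sum_nonneg fun j _ => sub_nonneg.2 (ha j).le).trans_lt hb
  set ν := (Measure.pi μ).withDensity fun y => ENNReal.ofReal (weight y)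
  have hν (t : ℝ) (ht : 1 < t) : ν {y | M y < t} =
      ENNReal.ofReal (∏ j, c j / (1 - a j)) * ENNReal.ofReal (t ^ ∑ j, (1 - a j)) := by
    have hbox : {y | M y < t} = Set.univ.pi fun j => {x | f j x < t} := by
      ext y
      simp only [M, Set.mem_ofPred_eq, max_iSup_lt_iff zero_le_one, ht, true_and,
        Set.mem_univ_pi]
    rw [withDensity_apply _ (measurableSet_lt hM measurable_const), hbox,
      setLIntegral_pi_prod_rpow_neg_of_map_eq hf hf0 hμ ha (one_pos.trans ht)]
  rw [← lintegral_rpow_neg_of_measure_lt hM.aemeasurable hM1 hb0 hb hν,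
    lintegral_withDensity_eq_lintegral_mul _ (by fun_prop) (by fun_prop)]
  refine lintegral_congr fun y => ?_
  have hweight0 : 0 ≤ weight y := prod_nonneg fun j _ => rpow_nonneg (hf0 j (y j)) _
  rw [Pi.mul_apply, ← ENNReal.ofReal_mul hweight0, rpow_neg (zero_le_one.trans (hM1 y)),
    div_eq_mul_inv]

theorem integral_prod_rpow_neg_div_max_one_iSup_rpow (hf : ∀ j, Measurable (f j))
    (hf0 : ∀ j x, 0 ≤ f j x) (hμ : ∀ j, (μ j).map (f j) = c j • volume.restrict (Set.Ici 0))
    (ha : ∀ j, a j < 1) {b : ℝ} (hb : ∑ j, (1 - a j) < b) :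
    ∫ y, (∏ j, f j (y j) ^ (-a j)) / max 1 (⨆ j, f j (y j)) ^ b ∂Measure.pi μ =
      b / (b - ∑ j, (1 - a j)) * ∏ j, c j / (1 - a j) := by
  have hdegree : 0 ≤ ∑ j, (1 - a j) := sum_nonneg fun j _ => sub_nonneg.2 (ha j).le
  have hconst : 0 ≤ ∏ j, (c j / (1 - a j) : ℝ) :=
    prod_nonneg fun j _ => div_nonneg (c j).2 (sub_nonneg.2 (ha j).le)
  have hnonneg (y : ∀ j, X j) : 0 ≤ (∏ j, f j (y j) ^ (-a j)) / max 1 (⨆ j, f j (y j)) ^ b :=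
    div_nonneg (prod_nonneg fun j _ => rpow_nonneg (hf0 j (y j)) _) (by positivity)
  have hmeas : Measurable fun y : ∀ j, X j =>
      (∏ j, f j (y j) ^ (-a j)) / max 1 (⨆ j, f j (y j)) ^ b :=
    .div (by fun_prop) ((measurable_const.max (.iSup fun j => by fun_prop)).pow_const b)
  rw [integral_eq_lintegral_of_nonneg_ae (.of_forall hnonneg) hmeas.aestronglyMeasurable,
    lintegral_prod_rpow_neg_div_max_one_iSup_rpow hf hf0 hμ ha hb, ENNReal.toReal_mul,
    ENNReal.toReal_ofReal (div_nonneg (hdegree.trans hb.le) (sub_nonneg.2 hb.le)),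
    ENNReal.toReal_ofReal hconst]

end Product

section Heisenberg

variable (n : ℕ)

theorem hNorm_nonneg (x : Fin (2 * n + 1) → ℝ) : 0 ≤ hNorm n x := by
  unfold hNorm
  positivity

theorem measurable_hNorm : Measurable (hNorm n) := by
  unfold hNorm
  fun_prop

theorem hNorm_hDil {r : ℝ} (hr : 0 ≤ r) (x : Fin (2 * n + 1) → ℝ) :
    hNorm n (hDil n r x) = r * hNorm n x := by
  have hroot : (r ^ 4) ^ (1 / 4 : ℝ) = r := by
    rw [one_div]
    exact_mod_cast pow_rpow_inv_natCast hr four_ne_zero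
  simp only [hNorm, hDil, Fin.val_castLE, Fin.is_lt, if_true, lt_irrefl, if_false, mul_pow,
    ← mul_sum]
  rw [← pow_mul, ← mul_add, mul_rpow (by positivity) (by positivity), hroot]

theorem hDil_eq_toLin'_diagonal (r : ℝ) :
    hDil n r = Matrix.toLin' (.diagonal fun i : Fin (2 * n + 1) =>
      if (i : ℕ) < 2 * n then r else r ^ 2) := by
  ext x i
  simp only [Matrix.toLin'_apply, Matrix.mulVec_diagonal, hDil, ite_mul]

theorem volume_preimage_hDil {r : ℝ} (hr : r ≠ 0) (s : Set (Fin (2 * n + 1) → ℝ)) :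
    volume (hDil n r ⁻¹' s) = ENNReal.ofReal |(r ^ (2 * n + 2))⁻¹| * volume s := by
  have hdet : LinearMap.det (Matrix.toLin' (.diagonal fun i : Fin (2 * n + 1) =>
      if (i : ℕ) < 2 * n then r else r ^ 2)) = r ^ (2 * n + 2) := by
    rw [LinearMap.det_toLin', Matrix.det_diagonal, Fin.prod_univ_castSucc]
    simp [pow_add]
  rw [hDil_eq_toLin'_diagonal, Measure.addHaar_preimage_linearMap _ (by simp [hdet, hr]), hdet]

theorem volume_hNorm_lt {r : ℝ} (hr : 0 < r) :
    volume {x | hNorm n x < r} =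
      ENNReal.ofReal (r ^ (2 * n + 2)) * volume {x | hNorm n x < 1} := by
  have hpre : {x | hNorm n x < r} = hDil n r⁻¹ ⁻¹' {x | hNorm n x < 1} := by
    ext x
    simp only [Set.mem_preimage, Set.mem_ofPred_eq, hNorm_hDil n (inv_pos.2 hr).le,
      inv_mul_lt_one₀ hr]
  rw [hpre, volume_preimage_hDil n (inv_ne_zero hr.ne'), inv_pow, inv_inv,
    abs_of_pos (by positivity)]

variable {n} in
theorem abs_apply_le_one_of_hNorm_lt_one {x : Fin (2 * n + 1) → ℝ} (hx : hNorm n x < 1)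
    (i : Fin (2 * n + 1)) : |x i| ≤ 1 := by
  set σ := ∑ i : Fin (2 * n), x (Fin.castLE (by omega) i) ^ 2
  have hlt : σ ^ 2 + x ⟨2 * n, by omega⟩ ^ 2 < 1 := by
    by_contra! h
    exact hx.not_ge (one_le_rpow h (by norm_num))
  rw [← sq_le_one_iff_abs_le_one]
  induction i using Fin.lastCases with
  | last => exact (le_add_of_nonneg_left (sq_nonneg σ)).trans hlt.le
  | cast j =>
    calc x j.castSucc ^ 2
        ≤ σ := single_le_sum (f := fun i : Fin (2 * n) => x (Fin.castLE (by omega) i) ^ 2)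
          (fun i _ => sq_nonneg _) (mem_univ j)
      _ ≤ 1 := by nlinarith [sq_nonneg (x ⟨2 * n, by omega⟩)]

theorem volume_hNorm_lt_one_ne_top : volume {x | hNorm n x < 1} ≠ ∞ := by
  have hsub : {x | hNorm n x < 1} ⊆ Metric.closedBall 0 1 := fun x hx => by
    rw [mem_closedBall_zero_iff, pi_norm_le_iff_of_nonneg zero_le_one]
    exact abs_apply_le_one_of_hNorm_lt_one hx
  exact measure_ne_top_of_subset hsub measure_closedBall_lt_top.ne

theorem volume_hNorm_rpow_lt (t : ℝ) :
    volume {x | hNorm n x ^ (2 * n + 2 : ℝ) < t} =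
      volume {x | hNorm n x < 1} * ENNReal.ofReal t := by
  have hQ : (0 : ℝ) < 2 * n + 2 := by positivity
  rcases le_or_gt t 0 with ht | ht
  · have hempty : {x | hNorm n x ^ (2 * n + 2 : ℝ) < t} = ∅ := by
      ext x
      simpa using ht.trans (rpow_nonneg (hNorm_nonneg n x) _)
    rw [hempty, measure_empty, ENNReal.ofReal_of_nonpos ht, mul_zero]
  · have hpow : (t ^ (2 * n + 2 : ℝ)⁻¹) ^ (2 * n + 2) = t := by
      exact_mod_cast rpow_inv_natCast_pow ht.le (Nat.succ_ne_zero (2 * n + 1))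
    simp only [← lt_rpow_inv_iff_of_pos (hNorm_nonneg n _) ht.le hQ]
    rw [volume_hNorm_lt n (by positivity), hpow, mul_comm]

theorem map_hNorm_rpow_volume :
    (volume : Measure (Fin (2 * n + 1) → ℝ)).map (fun x => hNorm n x ^ (2 * n + 2 : ℝ)) =
      (volume {x | hNorm n x < 1}).toNNReal • volume.restrict (Set.Ici 0) := by
  refine map_eq_smul_restrict_Ici_of_measure_lt ((measurable_hNorm n).pow_const _) fun t => ?_
  rw [ENNReal.coe_toNNReal (volume_hNorm_lt_one_ne_top n), volume_hNorm_rpow_lt]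

end Heisenberg

theorem hlp_integral_general (n : ℕ) {ι : Type*} [Fintype ι] (a : ι → ℝ) (ha : ∀ j, a j < 1)
    (b : ℝ) (hb : ∑ j, (1 - a j) < b) :
    ∫ y : ι → (Fin (2 * n + 1) → ℝ),
        (∏ j, hNorm n (y j) ^ (-(2 * n + 2 : ℝ) * a j)) /
          (max 1 (⨆ j, hNorm n (y j) ^ (2 * n + 2 : ℝ))) ^ b =
      b / (b - ∑ j, (1 - a j)) *
        ((volume {x : Fin (2 * n + 1) → ℝ | hNorm n x < 1}).toReal ^ Fintype.card ι /
          ∏ j, (1 - a j)) := by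
  have hpow (j) (x : Fin (2 * n + 1) → ℝ) :
      hNorm n x ^ (-(2 * n + 2 : ℝ) * a j) = (hNorm n x ^ (2 * n + 2 : ℝ)) ^ (-a j) := by
    rw [← rpow_mul (hNorm_nonneg n x), neg_mul_comm]
  simp only [hpow]
  rw [volume_pi, integral_prod_rpow_neg_div_max_one_iSup_rpow
    (fun _ => (measurable_hNorm n).pow_const _) (fun _ x => rpow_nonneg (hNorm_nonneg n x) _)
    (fun _ => map_hNorm_rpow_volume n) ha hb, prod_div_distrib, prod_const, card_univ,
    ENNReal.coe_toNNReal_eq_toReal]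

/-- The m-linear Hardy–Littlewood–Pólya integral on the Heisenberg group:
∫ (∏ |y_j|^{-Q/p_j}) / max(1,|y₁|^Q,…,|y_m|^Q)^m = m·p·Ω_Q^m / ∏(1-1/p_j). -/
theorem hlp_integral (n m : ℕ) (hm : 1 ≤ m) (p : ℝ) (q : Fin m → ℝ)
    (hq : ∀ j, 1 < q j) (hp : 1 / p = ∑ j, 1 / q j) (hp1 : 1 < p) :
    ∫ y : Fin m → (Fin (2 * n + 1) → ℝ),
        (∏ j, hNorm n (y j) ^ (-((2 * n + 2 : ℝ)) / q j)) /
          (max 1 (⨆ j, hNorm n (y j) ^ (2 * n + 2 : ℝ))) ^ m =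
      m * p * (volume {x : Fin (2 * n + 1) → ℝ | hNorm n x < 1}).toReal ^ m /
        ∏ j, (1 - 1 / q j) := by
  have hsum : ∑ j, (q j)⁻¹ = p⁻¹ := by simpa using hp.symm
  simpa [hsum, div_eq_mul_inv, mul_assoc] using hlp_integral_general n (fun j => (q j)⁻¹)
    (fun j => inv_lt_one_of_one_lt₀ (hq j)) m (by simpa [hsum] using one_pos.trans hp1)
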